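/- arXiv:2404.16083 — 6 statements merged into one kernel-verified Lean document; each statement's English description precedes it below -/
import Mathlib

section
/- Let A be a complex d × (D·D) matrix (indexed by Fin d and Fin D × Fin D) with A·Aᴴ invertible, let A_R⁻¹ := Aᴴ·(A·Aᴴ)⁻¹ and P := A_R⁻¹·A, and let O_ℓ, O_r be unitary D × D complex matrices. Then there exists a d × d complex matrix O_p satisfying O_p·A = A·(O_ℓᵀ ⊗ O_r) if and only if (O_ℓᵀ ⊗ O_r) commutes with P. -/
open Matrix Kronecker

/-!
A matrix `B` factors through `A` on the left exactly when it is fixed by right multiplication with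
the row-space projector `P` of `A`, so `A * U` does so exactly when `P * U * P = P * U`, i.e. when
`U` preserves `ker A`. For normal `U` this forces commutation: `U * P` is then the orthogonal sum of
`P * U` and the commutator `U * P - P * U`, while `U * P` and `P * U` have the same Hilbert–Schmidt
norm because `U` is normal.
-/

theorem star_mul_self_commutator_of_mul_mul_eq {R : Type*} [NonUnitalRing R] [StarRing R]
    {p u : R} (hp : IsStarProjection p) (h : p * u * p = p * u) :
    star (u * p - p * u) * (u * p - p * u) = star (u * p) * (u * p) - star (p * u) * (p * u) := by
  have inner_right : star (p * u) * (u * p) = star (p * u) * (p * u) :=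
    calc star (p * u) * (u * p)
        = star u * (p * u * p) := by simp only [star_mul, hp.isSelfAdjoint.star_eq, mul_assoc]
      _ = star u * (p * p * u) := by rw [h, hp.isIdempotentElem.eq]
      _ = star (p * u) * (p * u) := by simp only [star_mul, hp.isSelfAdjoint.star_eq, mul_assoc]
  have inner_left : star (u * p) * (p * u) = star (p * u) * (p * u) := by
    simpa only [star_mul, star_star] using congrArg star inner_right
  rw [star_sub, sub_mul, mul_sub, mul_sub, inner_left, inner_right, sub_self, sub_zero]

section HilbertSchmidt

variable {n R : Type*} [Fintype n] [NonUnitalCommRing R] [StarRing R]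

theorem trace_conjTranspose_mul_self_mul_comm_of_isStarNormal {P U : Matrix n n R}
    (hP : IsStarProjection P) [IsStarNormal U] :
    trace ((U * P)ᴴ * (U * P)) = trace ((P * U)ᴴ * (P * U)) := by
  have hPH : Pᴴ = P := hP.isSelfAdjoint
  have hPP : P * P = P := hP.isIdempotentElem
  have hUU : Uᴴ * U = U * Uᴴ := star_comm_self' U
  calc trace ((U * P)ᴴ * (U * P))
      = trace (P * (Uᴴ * U) * P) := by simp only [conjTranspose_mul, hPH, Matrix.mul_assoc]
    _ = trace (P * (U * Uᴴ)) := by rw [trace_mul_comm, ← Matrix.mul_assoc, hPP, hUU]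
    _ = trace (Uᴴ * (P * U)) := by rw [← Matrix.mul_assoc, trace_mul_comm]
    _ = trace ((P * U)ᴴ * (P * U)) := by
      rw [conjTranspose_mul, hPH, Matrix.mul_assoc, ← Matrix.mul_assoc P, hPP]

theorem commute_iff_mul_mul_eq_mul_of_isStarNormal [PartialOrder R] [StarOrderedRing R]
    [NoZeroDivisors R] {P U : Matrix n n R} (hP : IsStarProjection P) [IsStarNormal U] :
    Commute U P ↔ P * U * P = P * U := by
  refine ⟨fun hUP ↦ ?_, fun hPUP ↦ ?_⟩
  · rw [Matrix.mul_assoc, hUP.eq, ← Matrix.mul_assoc, hP.isIdempotentElem.eq]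
  · have commutator_norm : trace ((U * P - P * U)ᴴ * (U * P - P * U)) = 0 := by
      simp only [← star_eq_conjTranspose, star_mul_self_commutator_of_mul_mul_eq hP hPUP]
      rw [trace_sub, sub_eq_zero]
      exact trace_conjTranspose_mul_self_mul_comm_of_isStarNormal hP
    exact sub_eq_zero.mp (trace_conjTranspose_mul_self_eq_zero_iff.mp commutator_norm)

end HilbertSchmidt

section RowSpaceProjector

variable {m n R : Type*} [Fintype m] [DecidableEq m] [Fintype n] [CommRing R] [StarRing R]

/-- The row-space projector `P = A_R⁻¹ * A` of `A`, where `A_R⁻¹ = Aᴴ * (A * Aᴴ)⁻¹`. It is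
meaningful only when `A * Aᴴ` is invertible: otherwise the matrix inverse, hence `P`, is `0`. -/
noncomputable def rowSpaceProjector (A : Matrix m n R) : Matrix n n R :=
  Aᴴ * (A * Aᴴ)⁻¹ * A

variable {A : Matrix m n R}

theorem mul_rowSpaceProjector (hA : IsUnit (A * Aᴴ)) : A * rowSpaceProjector A = A := by
  rw [rowSpaceProjector, ← Matrix.mul_assoc, ← Matrix.mul_assoc,
    mul_nonsing_inv _ ((isUnit_iff_isUnit_det _).mp hA), Matrix.one_mul]

theorem isStarProjection_rowSpaceProjector (hA : IsUnit (A * Aᴴ)) :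
    IsStarProjection (rowSpaceProjector A) where
  isIdempotentElem := by
    change rowSpaceProjector A * rowSpaceProjector A = rowSpaceProjector A
    conv_lhs => enter [1]; rw [rowSpaceProjector]
    rw [Matrix.mul_assoc, mul_rowSpaceProjector hA, rowSpaceProjector]
  isSelfAdjoint :=
    isHermitian_conjTranspose_mul_mul A (isHermitian_mul_conjTranspose_self A).inv

theorem exists_mul_eq_iff_mul_rowSpaceProjector_eq {l : Type*} (hA : IsUnit (A * Aᴴ))
    {B : Matrix l n R} :
    (∃ X : Matrix l m R, X * A = B) ↔ B * rowSpaceProjector A = B := by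
  refine ⟨?_, fun hB ↦ ⟨B * (Aᴴ * (A * Aᴴ)⁻¹), ?_⟩⟩
  · rintro ⟨X, rfl⟩
    rw [Matrix.mul_assoc, mul_rowSpaceProjector hA]
  · rwa [Matrix.mul_assoc]

theorem rowSpaceProjector_mul_eq_iff {l : Type*} (hA : IsUnit (A * Aᴴ)) {B C : Matrix n l R} :
    rowSpaceProjector A * B = rowSpaceProjector A * C ↔ A * B = A * C := by
  refine ⟨fun h ↦ ?_, fun h ↦ ?_⟩
  · rw [← mul_rowSpaceProjector hA, Matrix.mul_assoc, h, ← Matrix.mul_assoc]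
  · rw [rowSpaceProjector, Matrix.mul_assoc, h, ← Matrix.mul_assoc]

theorem existence_operator_pushing_general [PartialOrder R] [StarOrderedRing R]
    [NoZeroDivisors R] (hA : IsUnit (A * Aᴴ)) {U : Matrix n n R} [IsStarNormal U] :
    (∃ X : Matrix m m R, X * A = A * U) ↔ Commute U (rowSpaceProjector A) := by
  rw [exists_mul_eq_iff_mul_rowSpaceProjector_eq hA,
    commute_iff_mul_mul_eq_mul_of_isStarNormal (isStarProjection_rowSpaceProjector hA),
    Matrix.mul_assoc, Matrix.mul_assoc, rowSpaceProjector_mul_eq_iff hA]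

end RowSpaceProjector

/-- Theorem 1.1 (Existence of operator pushing): for a surjective virtual-to-physical
map `A` (rows linearly independent, i.e. `A * Aᴴ` invertible) and unitary virtual
operators `Oℓ`, `Or'`, a physical operator `Op` with `Op * A = A * (Oℓᵀ ⊗ₖ Or')`
exists iff `Oℓᵀ ⊗ₖ Or'` commutes with the rowspace projector `P = A_R⁻¹ * A`. -/
theorem existence_operator_pushing {d D : ℕ}
    (A : Matrix (Fin d) (Fin D × Fin D) ℂ)
    (hA : IsUnit (A * Aᴴ))
    (Oℓ Or' : Matrix (Fin D) (Fin D) ℂ)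
    (hOℓ : Oℓᴴ * Oℓ = 1 ∧ Oℓ * Oℓᴴ = 1)
    (hOr : Or'ᴴ * Or' = 1 ∧ Or' * Or'ᴴ = 1) :
    (∃ Op : Matrix (Fin d) (Fin d) ℂ, Op * A = A * (Oℓᵀ ⊗ₖ Or')) ↔
      Commute (Oℓᵀ ⊗ₖ Or') (Aᴴ * (A * Aᴴ)⁻¹ * A) := by
  have : IsStarNormal (Oℓᵀ ⊗ₖ Or') := isStarNormal_of_mem_unitary <|
    kronecker_mem_unitary (transpose_mem_unitaryGroup_iff.mpr hOℓ) hOr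
  open ComplexOrder in exact existence_operator_pushing_general hA
end

section
/- Let A be a complex d × (D·D) matrix (indexed by Fin d and Fin D × Fin D) with A·Aᴴ invertible, and let O_ℓ, O_r be unitary D × D complex matrices. Then there exists a UNITARY d × d complex matrix O_p satisfying O_p·A = A·(O_ℓᵀ ⊗ O_r) if and only if (O_ℓᵀ ⊗ O_r) commutes with Aᴴ·A. -/
open Matrix Kronecker

/-!
Right multiplication by a unitary `V` fixes the Gram matrix `Aᴴ * A` exactly when `V` commutes with
it, so it remains to see that matrices `A` and `B` with the same Gram matrix differ by a unitary on
the left. If `A * R = 1`, that unitary is forced to be `U = B * R`: we have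
`Uᴴ * B = Rᴴ * (Bᴴ * B) = (A * R)ᴴ * A = A`, hence `Uᴴ * U = A * R = 1`. As `U` is square, also
`U * Uᴴ = 1`, and therefore `U * A = U * Uᴴ * B = B`.
-/

section

variable {m n α : Type*} [Fintype m] [Semiring α] [StarRing α]

theorem conjTranspose_mul_self_mul_unitary_eq_iff_commute [Fintype n] [DecidableEq n]
    (A : Matrix m n α) {V : Matrix n n α} (hV : V ∈ unitary _) :
    (A * V)ᴴ * (A * V) = Aᴴ * A ↔ Commute V (Aᴴ * A) := by
  rw [commute_unitary_iff_star_left_conjugate hV, conjTranspose_mul, star_eq_conjTranspose]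
  simp only [Matrix.mul_assoc]

variable [DecidableEq m]

theorem conjTranspose_mul_self_eq_of_unitary_mul_eq {A B : Matrix m n α} {U : Matrix m m α}
    (hU : U ∈ unitary _) (h : U * A = B) : Bᴴ * B = Aᴴ * A := by
  have hUU : Uᴴ * U = 1 := Unitary.star_mul_self_of_mem hU
  rw [← h, conjTranspose_mul, Matrix.mul_assoc, ← Matrix.mul_assoc Uᴴ, hUU, Matrix.one_mul]

theorem exists_unitary_mul_eq_of_conjTranspose_mul_self_eq [Fintype n] [IsStablyFiniteRing α]
    {A B : Matrix m n α} {R : Matrix n m α} (hR : A * R = 1) (h : Bᴴ * B = Aᴴ * A) :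
    ∃ U ∈ unitary (Matrix m m α), U * A = B := by
  have hBA : (B * R)ᴴ * B = A := by
    calc (B * R)ᴴ * B = Rᴴ * (Bᴴ * B) := by rw [conjTranspose_mul, Matrix.mul_assoc]
      _ = (A * R)ᴴ * A := by rw [h, conjTranspose_mul, Matrix.mul_assoc]
      _ = A := by rw [hR, conjTranspose_one, Matrix.one_mul]
  have hU : (B * R)ᴴ * (B * R) = 1 := by rw [← Matrix.mul_assoc, hBA, hR]
  have hU' : B * R * (B * R)ᴴ = 1 := mul_eq_one_comm.mp hU
  refine ⟨B * R, Unitary.mem_iff.mpr ⟨hU, hU'⟩, ?_⟩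
  calc B * R * A = B * R * (B * R)ᴴ * B := by rw [Matrix.mul_assoc _ _ B, hBA]
    _ = B := by rw [hU', Matrix.one_mul]

theorem unitarity_operator_pushing_general [Fintype n] [DecidableEq n] [IsStablyFiniteRing α]
    {A : Matrix m n α} {R : Matrix n m α} (hR : A * R = 1)
    {V : Matrix n n α} (hV : V ∈ unitary _) :
    (∃ U ∈ unitary (Matrix m m α), U * A = A * V) ↔ Commute V (Aᴴ * A) := by
  rw [← conjTranspose_mul_self_mul_unitary_eq_iff_commute A hV]
  exact ⟨fun ⟨_, hU, h⟩ ↦ conjTranspose_mul_self_eq_of_unitary_mul_eq hU h,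
    exists_unitary_mul_eq_of_conjTranspose_mul_self_eq hR⟩

end

/-- Theorem 1.2 (Unitarity of operator pushing): for a surjective virtual-to-physical
map `A` (`A * Aᴴ` invertible) and unitary virtual operators `Oℓ`, `Or'`, a *unitary*
physical operator `Op` with `Op * A = A * (Oℓᵀ ⊗ₖ Or')` exists iff `Oℓᵀ ⊗ₖ Or'`
commutes with `Aᴴ * A`. -/
theorem unitarity_operator_pushing {d D : ℕ}
    (A : Matrix (Fin d) (Fin D × Fin D) ℂ)
    (hA : IsUnit (A * Aᴴ))
    (Oℓ Or' : Matrix (Fin D) (Fin D) ℂ)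
    (hOℓ : Oℓᴴ * Oℓ = 1 ∧ Oℓ * Oℓᴴ = 1)
    (hOr : Or'ᴴ * Or' = 1 ∧ Or' * Or'ᴴ = 1) :
    (∃ Op : Matrix (Fin d) (Fin d) ℂ,
        (Opᴴ * Op = 1 ∧ Op * Opᴴ = 1) ∧ Op * A = A * (Oℓᵀ ⊗ₖ Or')) ↔
      Commute (Oℓᵀ ⊗ₖ Or') (Aᴴ * A) := by
  obtain ⟨B, hB⟩ := hA.exists_right_inv
  have hV : Oℓᵀ ⊗ₖ Or' ∈ unitary _ :=
    kronecker_mem_unitary (transpose_mem_unitaryGroup_iff.mpr hOℓ) hOr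
  exact unitarity_operator_pushing_general (R := Aᴴ * B) (by rw [← Matrix.mul_assoc, hB]) hV
end

section
/- Let A be a complex d × n matrix with A·Aᴴ invertible, let A_R⁻¹ := Aᴴ·(A·Aᴴ)⁻¹ and P := A_R⁻¹·A, and let O be an n × n complex matrix commuting with P. Then O_p := A·O·A_R⁻¹ satisfies O_p·A = A·O. -/
open Matrix

theorem mul_mul_nonsing_inv_mul_eq_one {m n R : Type*} [Fintype m] [DecidableEq m] [Fintype n]
    [CommRing R] {A : Matrix m n R} {B : Matrix n m R} (hAB : IsUnit (A * B)) :
    A * (B * (A * B)⁻¹) = 1 := by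
  rw [← Matrix.mul_assoc, mul_nonsing_inv _ ((isUnit_iff_isUnit_det _).mp hAB)]

theorem pushed_operator_solves_general {m n R : Type*} [Fintype m] [Fintype n]
    [NonUnitalSemiring R] {A : Matrix m n R} {G : Matrix n m R} {O : Matrix n n R}
    (hG : A * G * A = A) (hO : Commute O (G * A)) :
    (A * O * G) * A = A * O :=
  calc
    A * O * G * A = A * (O * (G * A)) := by simp only [Matrix.mul_assoc]
    _ = A * (G * A * O) := by rw [hO.eq]
    _ = A * G * A * O := by simp only [Matrix.mul_assoc]
    _ = A * O := by rw [hG]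

/-- Constructive half of Theorem 1.1: if `O` commutes with the rowspace projector
`P = A_R⁻¹ * A` (where `A_R⁻¹ = Aᴴ * (A * Aᴴ)⁻¹` is the right inverse of `A`),
then `O_p := A * O * A_R⁻¹` solves the operator-pushing equation `O_p * A = A * O`. -/
theorem pushed_operator_solves {d n : ℕ}
    (A : Matrix (Fin d) (Fin n) ℂ) (hA : IsUnit (A * Aᴴ))
    (O : Matrix (Fin n) (Fin n) ℂ)
    (hO : Commute O (Aᴴ * (A * Aᴴ)⁻¹ * A)) :
    (A * O * (Aᴴ * (A * Aᴴ)⁻¹)) * A = A * O :=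
  pushed_operator_solves_general
    (by rw [mul_mul_nonsing_inv_mul_eq_one hA, Matrix.one_mul]) hO
end

section
/- Let A be a complex d × n matrix with A·Aᴴ invertible, and let O_p (d × d) and O (n × n) be complex matrices satisfying O_p·A = A·O. Then O_pᴴ·O_p = 1 if and only if Oᴴ·(Aᴴ·A)·O = Aᴴ·A. -/
open Matrix

section RowIndependence

variable {l m n R : Type*} [Fintype m] [Semiring R]

theorem linearIndependent_row_of_isUnit_mul [DecidableEq m] [Fintype n]
    {A : Matrix m n R} {B : Matrix n m R} (hAB : IsUnit (A * B)) :
    LinearIndependent R A.row := by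
  refine vecMul_injective_iff.mp (.of_comp (f := B.vecMul) ?_)
  simpa only [Function.comp_def, vecMul_vecMul] using vecMul_injective_of_isUnit hAB

theorem mul_left_injective_of_linearIndependent_row {A : Matrix m n R}
    (hA : LinearIndependent R A.row) :
    Function.Injective fun M : Matrix l m R ↦ M * A :=
  fun _ _ hMN ↦ ext_row fun i ↦ vecMul_injective_iff.mpr hA congr(($hMN).row i)

theorem conjTranspose_mul_mul_inj_of_linearIndependent_row [StarRing R] {A : Matrix m n R}
    (hA : LinearIndependent R A.row) {M N : Matrix m m R} :
    Aᴴ * M * A = Aᴴ * N * A ↔ M = N := by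
  refine ⟨fun hMN ↦ ?_, fun hMN ↦ by rw [hMN]⟩
  have cancel_right : Aᴴ * M = Aᴴ * N := mul_left_injective_of_linearIndependent_row hA hMN
  have adjoint_eq : Mᴴ * A = Nᴴ * A := by
    simpa only [conjTranspose_mul, conjTranspose_conjTranspose] using
      congrArg conjTranspose cancel_right
  exact conjTranspose_injective (mul_left_injective_of_linearIndependent_row hA adjoint_eq)

end RowIndependence

theorem conjTranspose_mul_gram_mul_eq_of_mul_eq_mul {k m n p R : Type*}
    [Fintype k] [Fintype m] [Fintype p] [NonUnitalSemiring R] [StarRing R]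
    {A : Matrix m n R} {B : Matrix k p R} {U : Matrix k m R} {V : Matrix p n R}
    (hUV : U * A = B * V) :
    Vᴴ * (Bᴴ * B) * V = Aᴴ * (Uᴴ * U) * A :=
  calc
    Vᴴ * (Bᴴ * B) * V = (B * V)ᴴ * (B * V) := by
      simp only [conjTranspose_mul, Matrix.mul_assoc]
    _ = (U * A)ᴴ * (U * A) := by rw [hUV]
    _ = Aᴴ * (Uᴴ * U) * A := by
      simp only [conjTranspose_mul, Matrix.mul_assoc]

theorem pushed_operator_unitarity_criterion_general {k m n p R : Type*}
    [Fintype k] [Fintype m] [DecidableEq m] [Fintype p] [Semiring R] [StarRing R]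
    {A : Matrix m n R} (hA : LinearIndependent R A.row) {B : Matrix k p R}
    {Op : Matrix k m R} {O : Matrix p n R} (h : Op * A = B * O) :
    Opᴴ * Op = 1 ↔ Oᴴ * (Bᴴ * B) * O = Aᴴ * A := by
  rw [conjTranspose_mul_gram_mul_eq_of_mul_eq_mul h,
    ← conjTranspose_mul_mul_inj_of_linearIndependent_row hA, Matrix.mul_one]

/-- Unitarity criterion for the pushed operator (proof of Theorem 1.2): if
`O_p * A = A * O` with `A * Aᴴ` invertible, then `O_p` is an isometry
(`O_pᴴ * O_p = 1`) iff `Oᴴ * (Aᴴ * A) * O = Aᴴ * A`. -/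
theorem pushed_operator_unitarity_criterion {d n : ℕ}
    (A : Matrix (Fin d) (Fin n) ℂ) (hA : IsUnit (A * Aᴴ))
    (Op : Matrix (Fin d) (Fin d) ℂ) (O : Matrix (Fin n) (Fin n) ℂ)
    (h : Op * A = A * O) :
    Opᴴ * Op = 1 ↔ Oᴴ * (Aᴴ * A) * O = Aᴴ * A :=
  pushed_operator_unitarity_criterion_general (linearIndependent_row_of_isUnit_mul hA) h
end

section
/- Let A be a complex d × n matrix with A·Aᴴ invertible, let P := Aᴴ·(A·Aᴴ)⁻¹·A, and let O be a unitary n × n complex matrix. If O commutes with Aᴴ·A, then O commutes with P. -/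
open Matrix

theorem commute_mul_of_mul_mul_eq_self {S : Type*} [Semigroup S] {g q x : S}
    (hgqg : g * q * g = g) (hgq : Commute g q) (hx : Commute x g) : Commute x (g * q) := by
  have hgqg' : g * (g * q) = g := by rw [hgq.eq, ← mul_assoc, hgqg]
  have left : x * (g * q) = g * q * x * (g * q) :=
    calc x * (g * q) = g * x * q := by rw [← mul_assoc, hx.eq]
      _ = g * q * (g * x) * q := by rw [← mul_assoc (g * q), hgqg]
      _ = g * q * x * (g * q) := by simp only [← hx.eq, mul_assoc]
  have right : g * q * x = g * q * x * (g * q) :=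
    calc g * q * x = q * (x * g) := by rw [hgq.eq, mul_assoc, hx.eq]
      _ = q * (x * g) * (g * q) := by rw [mul_assoc q, mul_assoc x, hgqg']
      _ = g * q * x * (g * q) := by rw [hx.eq, ← mul_assoc q, ← hgq.eq]
  exact left.trans right.symm

section GroupInverse

variable {m n R : Type*} [Fintype m] [DecidableEq m] [Fintype n] [Semiring R]
  (A : Matrix m n R) (B : Matrix n m R) [Invertible (A * B)]

/-- The group inverse of `B * A` when `A * B` is invertible: the commuting generalized inverse
`B * (A * B)⁻² * A`. It exhibits the projector `B * (A * B)⁻¹ * A` as a multiple of `B * A`. -/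
def mulGroupInverse : Matrix n n R :=
  B * ⅟(A * B) * ⅟(A * B) * A

theorem mul_mulGroupInverse : B * A * mulGroupInverse A B = B * ⅟(A * B) * A :=
  calc B * A * mulGroupInverse A B
      = B * (A * B * ⅟(A * B)) * ⅟(A * B) * A := by simp only [mulGroupInverse, Matrix.mul_assoc]
    _ = B * ⅟(A * B) * A := by rw [mul_invOf_self, Matrix.mul_one]

theorem mulGroupInverse_mul : mulGroupInverse A B * (B * A) = B * ⅟(A * B) * A :=
  calc mulGroupInverse A B * (B * A)
      = B * ⅟(A * B) * (⅟(A * B) * (A * B)) * A := by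
        simp only [mulGroupInverse, Matrix.mul_assoc]
    _ = B * ⅟(A * B) * A := by rw [invOf_mul_self, Matrix.mul_one]

theorem commute_mulGroupInverse : Commute (B * A) (mulGroupInverse A B) :=
  (mul_mulGroupInverse A B).trans (mulGroupInverse_mul A B).symm

theorem mul_mulGroupInverse_mul : B * A * mulGroupInverse A B * (B * A) = B * A :=
  calc B * A * mulGroupInverse A B * (B * A)
      = B * (⅟(A * B) * (A * B)) * A := by
        rw [mul_mulGroupInverse]; simp only [Matrix.mul_assoc]
    _ = B * A := by rw [invOf_mul_self, Matrix.mul_one]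

theorem commute_gram_implies_commute_projector_general {X : Matrix n n R}
    (h : Commute X (B * A)) : Commute X (B * ⅟(A * B) * A) := by
  rw [← mul_mulGroupInverse]
  exact commute_mul_of_mul_mul_eq_self (mul_mulGroupInverse_mul A B)
    (commute_mulGroupInverse A B) h

end GroupInverse

/-- End of Appendix A: for `A` with `A * Aᴴ` invertible and a unitary `O`,
commutation with `Aᴴ * A` implies commutation with the rowspace projector
`P = Aᴴ * (A * Aᴴ)⁻¹ * A`; thus the condition of Theorem 1.2 subsumes that of
Theorem 1.1. -/
theorem commute_gram_implies_commute_projector {d n : ℕ}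
    (A : Matrix (Fin d) (Fin n) ℂ) (hA : IsUnit (A * Aᴴ))
    (O : Matrix (Fin n) (Fin n) ℂ)
    (hO : Oᴴ * O = 1 ∧ O * Oᴴ = 1)
    (h : Commute O (Aᴴ * A)) :
    Commute O (Aᴴ * (A * Aᴴ)⁻¹ * A) := by
  let _ := hA.invertible
  simpa only [invOf_eq_nonsing_inv] using commute_gram_implies_commute_projector_general A Aᴴ h
end

section
/- Let t be a real number, η := 1/√(1+t²), and define the 2 × 2 real matrices A⁰ := η·[[1,0],[t,0]] and A¹ := η·[[0,−t],[0,1]]. Then the 4 × 4 transfer matrix E := A⁰ ⊗ A⁰ + A¹ ⊗ A¹ has characteristic polynomial λ²·(λ − 1)·(λ − (1−t²)/(1+t²)); in particular its eigenvalues are 1, (1−t²)/(1+t²), 0, 0. -/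
open Matrix Kronecker Polynomial

/-!
Each `Aᵏ` keeps only the `k`-th column of the scaled rotation `U = η [[1, -t], [t, 1]]`, so it has
rank one and `Aᵏ ⊗ Aᵏ` has rank one too. Hence `E` factors through a space of dimension two, and
exchanging the two factors turns it into the entrywise square `η² [[1, t²], [t², 1]]` of `U`, at the
cost of a factor `λ²` in the characteristic polynomial. The eigenvalues of that matrix are
`η² (1 ± t²)`, on the vectors `(1, ±1)`.
-/

section KhatriRao

variable {m n κ ι R : Type*}

/-- The column-wise Khatri–Rao product: the `k`-th column of `khatriRao A B` is the Kronecker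
product of the `k`-th columns of `A` and `B`. It collects the factors of a sum of Kronecker products
of rank-one matrices into a single matrix. -/
def khatriRao [Mul R] (A : Matrix m κ R) (B : Matrix n κ R) : Matrix (m × n) κ R :=
  of fun i k ↦ A i.1 k * B i.2 k

variable [NonUnitalCommSemiring R]

theorem transpose_khatriRao_mul_khatriRao [Fintype m] [Fintype n]
    (A : Matrix m κ R) (B : Matrix n κ R) (A' : Matrix m ι R) (B' : Matrix n ι R) :
    (khatriRao A B)ᵀ * khatriRao A' B' = (Aᵀ * A') ⊙ (Bᵀ * B') := by
  ext k l
  simp only [khatriRao, mul_apply, transpose_apply, of_apply, hadamard_apply,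
    Fintype.sum_mul_sum, Fintype.sum_prod_type, mul_mul_mul_comm]

theorem sum_vecMulVec_kronecker_vecMulVec {m' n' : Type*} [Fintype κ]
    (A : Matrix m κ R) (B : Matrix n κ R) (A' : Matrix m' κ R) (B' : Matrix n' κ R) :
    ∑ k, vecMulVec (A.col k) (A'.col k) ⊗ₖ vecMulVec (B.col k) (B'.col k) =
      khatriRao A B * (khatriRao A' B')ᵀ := by
  ext ⟨i, i'⟩ ⟨j, j'⟩
  simp only [khatriRao, Matrix.sum_apply, kronecker_apply, vecMulVec_apply, col_apply, mul_apply,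
    transpose_apply, of_apply, mul_mul_mul_comm]

end KhatriRao

section Charpoly

variable {m n κ R : Type*} [CommRing R]

theorem charpoly_sum_vecMulVec_kronecker_vecMulVec [Fintype m] [DecidableEq m] [Fintype n]
    [DecidableEq n] [Fintype κ] [DecidableEq κ] (A A' : Matrix m κ R) (B B' : Matrix n κ R)
    (hκ : Fintype.card κ ≤ Fintype.card (m × n)) :
    (∑ k, vecMulVec (A.col k) (A'.col k) ⊗ₖ vecMulVec (B.col k) (B'.col k)).charpoly =
      X ^ (Fintype.card (m × n) - Fintype.card κ) * ((A'ᵀ * A) ⊙ (B'ᵀ * B)).charpoly := by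
  rw [sum_vecMulVec_kronecker_vecMulVec, charpoly_mul_comm_of_le _ _ hκ,
    transpose_khatriRao_mul_khatriRao]

theorem charpoly_fin_two_circulant (a b : R) :
    !![a, b; b, a].charpoly = (X - C (a + b)) * (X - C (a - b)) := by
  nontriviality R
  rw [charpoly_fin_two, trace_fin_two_of, det_fin_two_of]
  simp only [C_add, C_sub, C_mul]
  ring

theorem z2_family_transfer_matrix_charpoly_general (η t : R) :
    let A0 : Matrix (Fin 2) (Fin 2) R := η • !![1, 0; t, 0]
    let A1 : Matrix (Fin 2) (Fin 2) R := η • !![0, -t; 0, 1]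
    (A0 ⊗ₖ A0 + A1 ⊗ₖ A1).charpoly =
      X ^ 2 * (X - C (η ^ 2 * (1 + t ^ 2))) * (X - C (η ^ 2 * (1 - t ^ 2))) := by
  intro A0 A1
  let U : Matrix (Fin 2) (Fin 2) R := η • !![1, -t; t, 1]
  let I : Matrix (Fin 2) (Fin 2) R := 1
  have hA0 : A0 = vecMulVec (U.col 0) (I.col 0) := by
    ext i j; fin_cases i <;> fin_cases j <;> simp [A0, U, I, vecMulVec_apply]
  have hA1 : A1 = vecMulVec (U.col 1) (I.col 1) := by
    ext i j; fin_cases i <;> fin_cases j <;> simp [A1, U, I, vecMulVec_apply]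
  have hU : U ⊙ U = !![η ^ 2, η ^ 2 * t ^ 2; η ^ 2 * t ^ 2, η ^ 2] := by
    ext i j; fin_cases i <;> fin_cases j <;> simp [U] <;> ring
  calc (A0 ⊗ₖ A0 + A1 ⊗ₖ A1).charpoly
    _ = (∑ k, vecMulVec (U.col k) (I.col k) ⊗ₖ vecMulVec (U.col k) (I.col k)).charpoly := by
      rw [Fin.sum_univ_two, hA0, hA1]
    _ = X ^ 2 * (U ⊙ U).charpoly := by
      rw [charpoly_sum_vecMulVec_kronecker_vecMulVec U I U I (by simp), transpose_one, one_mul,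
        Fintype.card_prod, Fintype.card_fin]
    _ = X ^ 2 * (X - C (η ^ 2 * (1 + t ^ 2))) * (X - C (η ^ 2 * (1 - t ^ 2))) := by
      rw [hU, charpoly_fin_two_circulant, mul_assoc, mul_one_add, mul_one_sub]

end Charpoly

/-- Transfer-matrix spectrum of the ℤ₂-symmetric family (Section III.C.1, with
`g = -t²`): the transfer matrix `E = A⁰ ⊗ A⁰ + A¹ ⊗ A¹` has characteristic
polynomial `λ²(λ-1)(λ-(1-t²)/(1+t²))`, hence eigenvalues `1, (1-t²)/(1+t²), 0, 0`,
substantiating the correlation length formula `ξ = |ln((1+g)/(1-g))|⁻¹`. -/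
theorem z2_family_transfer_matrix_charpoly (t : ℝ) :
    let η : ℝ := 1 / Real.sqrt (1 + t ^ 2)
    let A0 : Matrix (Fin 2) (Fin 2) ℝ := η • !![1, 0; t, 0]
    let A1 : Matrix (Fin 2) (Fin 2) ℝ := η • !![0, -t; 0, 1]
    (A0 ⊗ₖ A0 + A1 ⊗ₖ A1).charpoly =
      X ^ 2 * (X - 1) * (X - C ((1 - t ^ 2) / (1 + t ^ 2))) := by
  intro η A0 A1
  have hη : η ^ 2 = (1 + t ^ 2)⁻¹ := by
    rw [div_pow, one_pow, Real.sq_sqrt (by positivity), one_div]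
  rw [z2_family_transfer_matrix_charpoly_general, hη, inv_mul_cancel₀ (by positivity), C_1,
    inv_mul_eq_div]
end
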